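/- arXiv:1507.02341 — 4 statements merged into one kernel-verified Lean document; each statement's English description precedes it below -/
import Mathlib

section
/- Let p(x) = a_n x^n + ... + a_1 x + a_0 be a real polynomial of degree n (so a_n ≠ 0) all of whose roots are real. Then for every j with 1 ≤ j ≤ n−1, one has a_j^2 / C(n,j)^2 ≥ (a_{j+1}·a_{j−1}) / (C(n,j+1)·C(n,j−1)), where C(n,j) denotes the binomial coefficient; equivalently, a_j^2 · C(n,j+1) · C(n,j−1) ≥ a_{j+1} · a_{j−1} · C(n,j)^2. -/
/-!
A real-rooted polynomial splits over `ℝ`, and by Rolle's theorem (counted with multiplicities)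
splitting passes to the derivative. Differentiating `j - 1` times moves the coefficients
`a_{j-1}, a_j, a_{j+1}` to the bottom, up to explicit factors, so the claim reduces to the three
lowest coefficients `b₀, b₁, b₂` of a split polynomial of degree `m`:
`2 m b₀ b₂ ≤ (m - 1) b₁²`. This is Laguerre's inequality at `0`, and it is proved by induction on
the number of linear factors (`laguerre_prod`).
-/

open Polynomial

/-- A real polynomial is real-rooted if all of its complex roots are real. -/
def RealRooted (p : Polynomial ℝ) : Prop :=
  ∀ z : ℂ, Polynomial.aeval z p = 0 → z.im = 0

theorem RealRooted.splits {p : ℝ[X]} (h : RealRooted p) : p.Splits := by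
  refine Splits.of_splits_map_of_injective (i := algebraMap ℝ ℂ)
    (algebraMap ℝ ℂ).injective (IsAlgClosed.splits _) fun z hz => ?_
  have hz' : aeval z p = 0 := by
    rw [← eval_map_algebraMap]
    exact isRoot_of_mem_roots hz
  exact ⟨z.re, Complex.ext (by simp) (by simp [h z hz'])⟩

/-- By Rolle's theorem the derivative has at least `deg p - 1` roots, which is its degree. -/
theorem splits_derivative_real {p : ℝ[X]} (h : p.Splits) : (derivative p).Splits := by
  rw [splits_iff_card_roots] at h ⊢
  have h1 := card_roots_le_derivative p
  have h2 := natDegree_derivative_le p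
  have h3 := card_roots' (derivative p)
  omega

/-- Laguerre's inequality at `0` for a product of monic linear factors. -/
theorem laguerre_prod (s : Multiset ℝ) :
    2 * (s.card : ℝ) * ((s.map (X - C ·)).prod.coeff 0 * (s.map (X - C ·)).prod.coeff 2)
      ≤ ((s.card : ℝ) - 1) * (s.map (X - C ·)).prod.coeff 1 ^ 2 := by
  induction s using Multiset.induction with
  | empty => simp [coeff_one]
  | cons r s ih =>
    rcases s.empty_or_exists_mem with rfl | ⟨x, hx⟩
    · simp [coeff_X]
    have hm : (0 : ℝ) < s.card := by
      exact_mod_cast Multiset.card_pos_iff_exists_mem.2 ⟨x, hx⟩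
    simp only [Multiset.map_cons, Multiset.prod_cons, Multiset.card_cons, sub_mul, coeff_sub,
      coeff_C_mul, coeff_X_mul, coeff_X_mul_zero, Nat.cast_add, Nat.cast_one]
    generalize (s.map (X - C ·)).prod = q at *
    generalize (s.card : ℝ) = m at *
    -- After multiplication by `m`, the difference of the two sides is at least `(m b₀ + r b₁)²`.
    refine le_of_mul_le_mul_left ?_ hm
    have h1 := mul_le_mul_of_nonneg_left ih (by positivity : 0 ≤ (m + 1) * r ^ 2)
    nlinarith [sq_nonneg (m * q.coeff 0 + r * q.coeff 1)]

/-- Newton's inequality with the binomial coefficients cancelled, `m` being `n - k`. The induction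
on `k` differentiates, so that the base case is Laguerre's inequality at `0`. -/
theorem newton_aux (k m : ℕ) (p : ℝ[X]) (hp : p.Splits) (hd : p.natDegree = m + k) :
    (m : ℝ) * (k + 2) * (p.coeff k * p.coeff (k + 2))
      ≤ ((m : ℝ) - 1) * (k + 1) * p.coeff (k + 1) ^ 2 := by
  induction k generalizing p with
  | zero =>
    have h := laguerre_prod p.roots
    have hc : p.roots.card = m := by rw [← hp.natDegree_eq_card_roots, hd, add_zero]
    rw [hc] at h
    rw [hp.eq_prod_roots]
    simp only [coeff_C_mul, Nat.cast_zero, zero_add]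
    have h1 := mul_le_mul_of_nonneg_left h (sq_nonneg p.leadingCoeff)
    linarith
  | succ k ih =>
    have h := ih (derivative p) (splits_derivative_real hp) (by rw [natDegree_derivative, hd]; omega)
    simp only [coeff_derivative] at h
    push_cast at h ⊢
    have hk : (0 : ℝ) < (k + 1) * (k + 2) := by positivity
    refine le_of_mul_le_mul_left ?_ hk
    rw [show k + 1 + 2 = k + 2 + 1 from rfl]
    linarith

/-- Newton's inequality: for a real-rooted real polynomial of degree `n`, the
coefficients satisfy `a_j^2 / C(n,j)^2 ≥ a_{j+1} a_{j-1} / (C(n,j+1) C(n,j-1))`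
for `1 ≤ j ≤ n-1`; equivalently
`a_j^2 C(n,j+1) C(n,j-1) ≥ a_{j+1} a_{j-1} C(n,j)^2`. -/
theorem newton_inequality (p : Polynomial ℝ) (n : ℕ) (hdeg : p.degree = n)
    (hrr : RealRooted p) (j : ℕ) (hj1 : 1 ≤ j) (hjn : j + 1 ≤ n) :
    (p.coeff (j + 1) * p.coeff (j - 1)) / ((n.choose (j + 1) : ℝ) * (n.choose (j - 1) : ℝ))
      ≤ (p.coeff j) ^ 2 / (n.choose j : ℝ) ^ 2
    ∧ p.coeff (j + 1) * p.coeff (j - 1) * (n.choose j : ℝ) ^ 2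
      ≤ (p.coeff j) ^ 2 * (n.choose (j + 1) : ℝ) * (n.choose (j - 1) : ℝ) := by
  obtain ⟨k, rfl⟩ : ∃ k, j = k + 1 := ⟨j - 1, by omega⟩
  obtain ⟨m, rfl⟩ : ∃ m, n = m + k := ⟨n - k, by omega⟩
  have key := newton_aux k m p hrr.splits (natDegree_eq_of_degree_eq_some hdeg)
  -- The ratios of consecutive binomial coefficients.
  have e1 := congrArg (Nat.cast (R := ℝ)) (Nat.choose_succ_right_eq (m + k) k)
  have e2 := congrArg (Nat.cast (R := ℝ)) (Nat.choose_succ_right_eq (m + k) (k + 1))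
  rw [show m + k - k = m by omega] at e1
  rw [show m + k - (k + 1) = m - 1 by omega] at e2
  push_cast [show 1 ≤ m by omega] at e1 e2
  have c0 : (0 : ℝ) < (m + k).choose k := by exact_mod_cast Nat.choose_pos (by omega)
  have c1 : (0 : ℝ) < (m + k).choose (k + 1) := by exact_mod_cast Nat.choose_pos (by omega)
  have c2 : (0 : ℝ) < (m + k).choose (k + 1 + 1) := by exact_mod_cast Nat.choose_pos (by omega)
  have hm : (0 : ℝ) < m := by exact_mod_cast (by omega : 0 < m)
  simp only [Nat.add_sub_cancel]
  rw [show k + 2 = k + 1 + 1 from rfl] at key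
  generalize ((m + k).choose k : ℝ) = A at *
  generalize ((m + k).choose (k + 1) : ℝ) = B at *
  generalize ((m + k).choose (k + 1 + 1) : ℝ) = D at *
  have main : p.coeff (k + 1 + 1) * p.coeff k * B ^ 2 ≤ p.coeff (k + 1) ^ 2 * D * A := by
    have hpos : (0 : ℝ) < m * (k + 2) := by positivity
    refine le_of_mul_le_mul_left ?_ hpos
    calc (m : ℝ) * (k + 2) * (p.coeff (k + 1 + 1) * p.coeff k * B ^ 2)
        = B ^ 2 * (m * (k + 2) * (p.coeff k * p.coeff (k + 1 + 1))) := by ring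
      _ ≤ B ^ 2 * (((m : ℝ) - 1) * (k + 1) * p.coeff (k + 1) ^ 2) :=
          mul_le_mul_of_nonneg_left key (sq_nonneg B)
      _ = (B * (k + 1)) * (B * (m - 1)) * p.coeff (k + 1) ^ 2 := by ring
      _ = (A * m) * (D * (k + 1 + 1)) * p.coeff (k + 1) ^ 2 := by rw [e1, e2]
      _ = m * (k + 2) * (p.coeff (k + 1) ^ 2 * D * A) := by ring
  refine ⟨?_, main⟩
  rw [div_le_div_iff₀ (by positivity) (by positivity)]
  linarith
end

section
/- Let T be a tree on n ≥ 3 vertices. Then the coefficient sequence of the distance characteristic polynomial p_{𝒟(T)}(x) = det(xI − 𝒟(T)), namely the sequence of coefficients of x^0, x^1, ..., x^n, is log-concave. -/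
/-!
The distance matrix is real symmetric, so its characteristic polynomial has only real roots, and the
coefficients of any real-rooted polynomial satisfy Newton-type inequalities, which give
log-concavity.

The inequality proved is `(k + 2) a_k a_{k+2} ≤ (k + 1) a_{k+1}²` (`newton_coeff_of_splits`). For
`k = 0` it follows by multiplying in one linear factor at a time. By Rolle's theorem the derivative
of a real-rooted polynomial is real-rooted, and differentiating shifts `k` to `k + 1`.
-/

/-- A finite sequence `a 0, a 1, ..., a n` is log-concave if
`(a j)^2 ≥ a (j-1) * a (j+1)` for all `j = 1, ..., n-1`. -/
def SeqLogConcave (a : ℕ → ℝ) (n : ℕ) : Prop :=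
  ∀ j, 1 ≤ j → j + 1 ≤ n → a (j - 1) * a (j + 1) ≤ (a j) ^ 2

/-- The distance matrix of a graph `G`: the `(i,j)` entry is the graph
distance between `i` and `j`. -/
noncomputable def distMatrix {n : ℕ} (G : SimpleGraph (Fin n)) :
    Matrix (Fin n) (Fin n) ℝ :=
  fun i j => (G.dist i j : ℝ)

open Polynomial in
/-- Rolle's theorem, counting multiplicities: the derivative of a real-rooted polynomial is
real-rooted. -/
theorem splits_derivative_of_splits {p : ℝ[X]} (hp : p.Splits) : (derivative p).Splits := by
  by_cases h0 : p.natDegree = 0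
  · rw [derivative_of_natDegree_zero h0]
    exact Splits.zero
  · rw [splits_iff_card_roots] at hp ⊢
    have h1 := card_roots_le_derivative p
    have h2 := card_roots' (derivative p)
    have h3 := natDegree_derivative_lt h0
    omega

open Polynomial in
/-- With `p = ∑ aᵢ xⁱ`, the factor `x + r` turns the defect `a₁² - 2 a₀ a₂` into
`a₀² + r² (a₁² - 2 a₀ a₂)`, so the defect stays nonnegative. -/
theorem two_mul_coeff_zero_mul_coeff_two_le {p : ℝ[X]} (hp : p.Splits) :
    2 * (p.coeff 0 * p.coeff 2) ≤ p.coeff 1 ^ 2 := by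
  obtain ⟨m, hm⟩ := splits_iff_exists_multiset'.mp hp
  have key : ∀ m : Multiset ℝ, ∀ q : ℝ[X], q = (m.map (X + C ·)).prod →
      2 * (q.coeff 0 * q.coeff 2) ≤ q.coeff 1 ^ 2 := by
    intro m
    induction m using Multiset.induction_on with
    | empty => rintro q rfl; simp [coeff_one]
    | cons r s ih =>
      rintro q rfl
      have := ih _ rfl
      simp only [Multiset.map_cons, Multiset.prod_cons]
      generalize (s.map (X + C ·)).prod = q at this ⊢
      simp only [add_mul, coeff_add, coeff_C_mul, coeff_X_mul_zero, coeff_X_mul q 0,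
        coeff_X_mul q 1]
      nlinarith [sq_nonneg (q.coeff 0), mul_le_mul_of_nonneg_left this (sq_nonneg r)]
  have h := mul_le_mul_of_nonneg_left (key m _ rfl) (sq_nonneg p.leadingCoeff)
  rw [hm, coeff_C_mul, coeff_C_mul, coeff_C_mul]
  linarith

open Polynomial in
/-- A weak form of Newton's inequalities, by induction on `k` through the derivative. -/
theorem newton_coeff_of_splits (k : ℕ) {p : ℝ[X]} (hp : p.Splits) :
    ((k : ℝ) + 2) * (p.coeff k * p.coeff (k + 2)) ≤ ((k : ℝ) + 1) * p.coeff (k + 1) ^ 2 := by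
  induction k generalizing p with
  | zero => simpa using two_mul_coeff_zero_mul_coeff_two_le hp
  | succ k ih =>
    have h := ih (splits_derivative_of_splits hp)
    rw [coeff_derivative, coeff_derivative, coeff_derivative] at h
    change _ * (_ * p.coeff (k + 2 + 1)) ≤ _
    generalize p.coeff (k + 1) = a, p.coeff (k + 2 + 1) = c, p.coeff (k + 1 + 1) = b at h ⊢
    push_cast at h ⊢
    have hpos : (0 : ℝ) < (k + 1) * (k + 2) := by positivity
    refine le_of_mul_le_mul_left ?_ hpos
    linarith

/-- The coefficient sequence of the distance characteristic polynomial
`det(xI - 𝒟(T))` of a tree `T` on `n ≥ 3` vertices is log-concave. -/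
theorem distCharpoly_coeff_logConcave (n : ℕ) (hn : 3 ≤ n)
    (G : SimpleGraph (Fin n)) (hG : G.IsTree) :
    SeqLogConcave (fun k => ((distMatrix G).charpoly).coeff k) n := by
  have hsymm : (distMatrix G).IsHermitian := by
    ext i j
    simp [distMatrix, G.dist_comm]
  intro j hj _
  obtain ⟨k, rfl⟩ := Nat.exists_eq_add_of_le' hj
  have h := newton_coeff_of_splits k hsymm.splits_charpoly
  have hk : (0 : ℝ) < (k : ℝ) + 2 := by positivity
  refine le_of_mul_le_mul_left (h.trans ?_) hk
  exact mul_le_mul_of_nonneg_right (by linarith) (sq_nonneg _)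
end

section
/- Let T be a tree on n ≥ 3 vertices, let ρ be a nonnegative real number with ρ ≤ 1, and suppose the number of paths of length 2 in T (i.e., the number of subtrees of T isomorphic to the path on three vertices, which equals Σ_v C(deg(v),2)) is at least ρ·C(n−1,2). Then every index m at which the sequence of normalized coefficients d_0(T), d_1(T), ..., d_{n−2}(T) attains its maximum satisfies m ≤ ⌈((2−ρ)/(3−ρ))·n⌉. -/
/-- The polynomial `det(𝒟(G) - xI)`, whose coefficient of `x^k` is `δ_k(G)`. -/
noncomputable def deltaPoly {n : ℕ} (G : SimpleGraph (Fin n)) : Polynomial ℝ :=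
  ((distMatrix G).map Polynomial.C
    - (Polynomial.X : Polynomial ℝ) • (1 : Matrix (Fin n) (Fin n) (Polynomial ℝ))).det

/-- The normalized coefficients `d_k(G) = 2^{k-n+2} |δ_k(G)|`. -/
noncomputable def normCoeff {n : ℕ} (G : SimpleGraph (Fin n)) (k : ℕ) : ℝ :=
  ((2 : ℝ) ^ k / (2 : ℝ) ^ (n - 2)) * |(deltaPoly G).coeff k|

namespace TreeDistance

open Finset Matrix Polynomial

variable {n : ℕ}

/-! ### Distances in trees -/

/-- Seen from `j`, every other vertex `i` of a tree has exactly one neighbour closer to `j`; all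
its other neighbours are one step farther away. -/
lemma tree_nbr {G : SimpleGraph (Fin n)} (hG : G.IsTree) {i j : Fin n} (hij : i ≠ j) :
    ∃ k₀, G.Adj i k₀ ∧ G.dist i j = G.dist k₀ j + 1 ∧
      ∀ k, G.Adj i k → k ≠ k₀ → G.dist k j = G.dist i j + 1 := by
  obtain ⟨p, hp, hlen⟩ := hG.connected.exists_path_of_dist i j
  have hnil : ¬ p.Nil := fun h => hij h.eq
  have hclose : ∀ k, G.Adj i k → G.dist i j = G.dist k j + 1 → k = p.snd := by
    intro k hk hd
    obtain ⟨q, hq, hql⟩ := hG.connected.exists_path_of_dist k j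
    have hc : (SimpleGraph.Walk.cons hk q).IsPath :=
      SimpleGraph.Walk.isPath_of_length_eq_dist _ (by simp [hql, hd])
    have := (hG.existsUnique_path i j).unique hc hp
    rw [← this]; simp
  have hdich : ∀ k, G.Adj i k → G.dist i j = G.dist k j + 1 ∨ G.dist k j = G.dist i j + 1 := by
    intro k hk
    have := hG.dist_eq_dist_add_one_of_adj j hk
    rwa [G.dist_comm (u := j), G.dist_comm (u := j)] at this
  refine ⟨p.snd, p.adj_snd hnil, ?_, fun k hk hne =>
    (hdich k hk).resolve_left fun h => hne (hclose k hk h)⟩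
  have h1 := SimpleGraph.dist_le p.tail
  have h2 := p.length_tail_add_one hnil
  rcases hdich _ (p.adj_snd hnil) with h | h <;> omega

/-- The sum over the neighbours of `i` of a quadratic function (without constant term) of the
distance to `j`. The linear case computes the product of the Laplacian with the distance matrix, the
square case yields `sum_dist`. -/
lemma tree_sum_nbr {G : SimpleGraph (Fin n)} [DecidableRel G.Adj] (hG : G.IsTree) (i j : Fin n)
    (a b : ℝ) :
    ∑ k ∈ G.neighborFinset i, (a * (G.dist k j : ℝ) ^ 2 + b * G.dist k j)
      = G.degree i * (a * (G.dist i j : ℝ) ^ 2 + b * G.dist i j)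
        + (a * (2 * (G.degree i - 2) * G.dist i j + G.degree i)
          + b * (if i = j then (G.degree i : ℝ) else G.degree i - 2)) := by
  split_ifs with h
  · subst h
    have : ∀ k ∈ G.neighborFinset i, (a * (G.dist k i : ℝ) ^ 2 + b * G.dist k i) = a + b := by
      intro k hk
      rw [SimpleGraph.dist_eq_one_iff_adj.2 (by simpa using (G.mem_neighborFinset i k |>.1 hk).symm)]
      simp
    rw [sum_congr rfl this]; simp; ring
  · obtain ⟨k₀, h1, h2, h3⟩ := tree_nbr hG h
    have hmem : k₀ ∈ G.neighborFinset i := by simpa using h1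
    rw [← add_sum_erase _ _ hmem]
    have : ∀ k ∈ (G.neighborFinset i).erase k₀, (a * (G.dist k j : ℝ) ^ 2 + b * G.dist k j)
        = a * (G.dist i j + 1 : ℝ) ^ 2 + b * (G.dist i j + 1) := by
      intro k hk
      rw [mem_erase, SimpleGraph.mem_neighborFinset] at hk
      rw [h3 k hk.2 hk.1]; push_cast; ring
    have hd : (G.dist k₀ j : ℝ) = G.dist i j - 1 := by rw [h2]; push_cast; ring
    have hc : (((G.neighborFinset i).erase k₀).card : ℝ) = G.degree i - 1 := by
      rw [card_erase_of_mem hmem, Nat.cast_sub (card_pos.2 ⟨_, hmem⟩)]; simp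
    rw [sum_congr rfl this, sum_const, nsmul_eq_mul, hc, hd]
    ring

lemma sum_deg {G : SimpleGraph (Fin n)} [DecidableRel G.Adj] (hG : G.IsTree) :
    ∑ i, (G.degree i : ℝ) = 2 * (n - 1) := by
  have h1 := G.sum_degrees_eq_twice_card_edges
  have h2 := hG.card_edgeFinset
  rw [Fintype.card_fin] at h2
  have h3 : (#G.edgeFinset : ℝ) + 1 = n := by exact_mod_cast h2
  rw [← Nat.cast_sum, h1]; push_cast; linarith

/-- Obtained by summing the squared distances to `j` over all ordered adjacent pairs, from either
end of the pair. -/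
lemma sum_dist {G : SimpleGraph (Fin n)} [DecidableRel G.Adj] (hG : G.IsTree) (j : Fin n) :
    ∑ i, (2 - G.degree i : ℝ) * G.dist i j = n - 1 := by
  have h := fun i => tree_sum_nbr hG i j 1 0
  simp only [one_mul, zero_mul, add_zero] at h
  have hs : ∑ i, ∑ k ∈ G.neighborFinset i, (G.dist k j : ℝ) ^ 2
      = ∑ i, (G.degree i : ℝ) * (G.dist i j : ℝ) ^ 2 := by
    rw [sum_comm' (s := univ) (t := fun i => G.neighborFinset i) (t' := univ)
      (s' := fun k => G.neighborFinset k) (by simp [SimpleGraph.adj_comm])]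
    simp
  simp_rw [h] at hs
  rw [sum_add_distrib, sum_add_distrib, sum_deg hG] at hs
  have : ∑ i, (2 - G.degree i : ℝ) * G.dist i j
    = - (1/2) * ∑ i, 2 * (G.degree i - 2 : ℝ) * G.dist i j := by
    rw [mul_sum]; exact sum_congr rfl fun i _ => by ring
  rw [this]; linarith

/-! ### The inverse of the distance matrix -/

/-- The vector `τ` with entries `2 - deg v`. -/
def tauVec (G : SimpleGraph (Fin n)) [DecidableRel G.Adj] : Fin n → ℝ := fun i => 2 - G.degree i

lemma distMatrix_transpose (G : SimpleGraph (Fin n)) : (distMatrix G)ᵀ = distMatrix G := by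
  ext i j; simp [distMatrix, G.dist_comm]

lemma lap_mul_dist {G : SimpleGraph (Fin n)} [DecidableRel G.Adj] (hG : G.IsTree) :
    G.lapMatrix ℝ * distMatrix G = vecMulVec (tauVec G) 1 - (2 : ℝ) • 1 := by
  ext i j
  have h := tree_sum_nbr hG i j 0 1
  have h2 := G.lapMatrix_mulVec_apply (R := ℝ) i (fun k => (G.dist k j : ℝ))
  have h3 : (G.lapMatrix ℝ * distMatrix G) i j
    = (G.lapMatrix ℝ *ᵥ (fun k => (G.dist k j : ℝ))) i := rfl
  simp only [zero_mul, zero_add, one_mul] at h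
  rw [h3, h2, h]
  by_cases hij : i = j
  · subst hij; simp [tauVec]
  · simp [tauVec, hij]

lemma dist_mul_lap {G : SimpleGraph (Fin n)} [DecidableRel G.Adj] (hG : G.IsTree) :
    distMatrix G * G.lapMatrix ℝ = vecMulVec 1 (tauVec G) - (2 : ℝ) • 1 := by
  have h := congrArg transpose (lap_mul_dist hG)
  rw [transpose_mul, distMatrix_transpose, (G.isSymm_lapMatrix (R := ℝ)).eq] at h
  rw [h]
  simp

lemma dist_mulVec_tau {G : SimpleGraph (Fin n)} [DecidableRel G.Adj] (hG : G.IsTree) :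
    distMatrix G *ᵥ tauVec G = ((n : ℝ) - 1) • 1 := by
  ext j
  have := sum_dist hG j
  simp only [mulVec, dotProduct, distMatrix, tauVec, Pi.smul_apply, Pi.one_apply, smul_eq_mul,
    mul_one]
  rw [← this]
  exact sum_congr rfl fun i _ => by rw [G.dist_comm]; ring

/-- The Graham–Lovász formula `-L/2 + ττᵀ/(2(n-1))` for the inverse of the distance matrix of a
tree, where `L` is the Laplacian. -/
noncomputable def distInv (G : SimpleGraph (Fin n)) [DecidableRel G.Adj] :
    Matrix (Fin n) (Fin n) ℝ :=
  (-(1 / 2) : ℝ) • G.lapMatrix ℝ + (1 / (2 * ((n : ℝ) - 1))) • vecMulVec (tauVec G) (tauVec G)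

lemma dist_mul_distInv (hn : 3 ≤ n) {G : SimpleGraph (Fin n)} [DecidableRel G.Adj]
    (hG : G.IsTree) : distMatrix G * distInv G = 1 := by
  have hn1 : (n : ℝ) - 1 ≠ 0 := by
    have : (3 : ℝ) ≤ n := by exact_mod_cast hn
    linarith
  rw [distInv, mul_add, Matrix.mul_smul, Matrix.mul_smul, mul_vecMulVec, dist_mulVec_tau hG,
    dist_mul_lap hG, smul_vecMulVec, smul_smul, smul_sub, smul_smul]
  rw [show 1 / (2 * ((n : ℝ) - 1)) * (n - 1) = 1 / 2 by field_simp]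
  ext i j
  simp

lemma trace_distInv (hn : 3 ≤ n) {G : SimpleGraph (Fin n)} [DecidableRel G.Adj]
    (hG : G.IsTree) : ((n : ℝ) - 1) * (distInv G).trace =
      ((∑ v : Fin n, (G.degree v).choose 2 : ℕ) : ℝ) - n ^ 2 + n + 2 := by
  have hn1 : (n : ℝ) - 1 ≠ 0 := by
    have : (3 : ℝ) ≤ n := by exact_mod_cast hn
    linarith
  have hL : (G.lapMatrix ℝ).trace = 2 * (n - 1) := by
    rw [← sum_deg hG]
    simp [trace, SimpleGraph.lapMatrix, SimpleGraph.degMatrix]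
  have hT : (vecMulVec (tauVec G) (tauVec G)).trace
      = 2 * ((∑ v : Fin n, (G.degree v).choose 2 : ℕ) : ℝ) + 4 * n - 6 * (n - 1) := by
    have h6 : (6 : ℝ) * (n - 1) = ∑ i, 3 * (G.degree i : ℝ) := by
      rw [← mul_sum, sum_deg hG]; ring
    have h4 : (4 : ℝ) * n = ∑ i : Fin n, (4 : ℝ) := by simp; ring
    rw [h6, h4]
    push_cast
    rw [mul_sum, ← sum_add_distrib, ← sum_sub_distrib, trace]
    refine sum_congr rfl fun i _ => ?_
    rw [Nat.cast_choose_two]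
    simp [vecMulVec_apply, tauVec]
    ring
  rw [distInv, trace_add, trace_smul, trace_smul, hL, hT]
  simp only [smul_eq_mul]
  field_simp
  ring

/-- Factor `det(D - xI) = det D · det(I - xD⁻¹)` and read off the linear coefficient. -/
lemma deltaPoly_coeff (hn : 3 ≤ n) {G : SimpleGraph (Fin n)} [DecidableRel G.Adj]
    (hG : G.IsTree) :
    (deltaPoly G).coeff 1 = - (deltaPoly G).coeff 0 * (distInv G).trace := by
  have hD := dist_mul_distInv hn hG
  have hf : deltaPoly G = C (distMatrix G).det *
      (1 + (X : ℝ[X]) • (-distInv G).map C).det := by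
    have h1 : (distMatrix G).map (C : ℝ →+* ℝ[X]) * (-distInv G).map C = -1 := by
      rw [← Matrix.map_mul, mul_neg, hD]
      ext i j
      by_cases hij : i = j <;> simp [hij]
    rw [RingHom.map_det, RingHom.mapMatrix_apply, ← det_mul, mul_add, Matrix.mul_smul, h1, deltaPoly,
      mul_one, smul_neg, sub_eq_add_neg]
  have c1 := coeff_det_one_add_X_smul_one (-distInv G)
  have c0 : (1 + (X : ℝ[X]) • (-distInv G).map C).det.coeff 0 = 1 := by
    rw [det_one_add_X_smul]; simp
  rw [hf, coeff_C_mul, coeff_C_mul, c1, c0, trace_neg]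
  ring

/-- The distance matrix `D` is negative semidefinite on the vectors `w` with zero sum: there
`L D w = -2w`, so `0 ≤ (Dw)ᵀ L (Dw) = -2 wᵀDw`. -/
lemma dist_quadratic {G : SimpleGraph (Fin n)} [DecidableRel G.Adj] (hG : G.IsTree)
    (w : Fin n → ℝ) (hw : ∑ i, w i = 0) : w ⬝ᵥ (distMatrix G *ᵥ w) ≤ 0 := by
  have hps := (G.posSemidef_lapMatrix ℝ).dotProduct_mulVec_nonneg (distMatrix G *ᵥ w)
  have h1 : G.lapMatrix ℝ *ᵥ (distMatrix G *ᵥ w) = (-2 : ℝ) • w := by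
    rw [mulVec_mulVec, lap_mul_dist hG, sub_mulVec, vecMulVec_mulVec]
    ext i
    simp [dotProduct, hw, smul_mulVec]
  rw [h1, star_trivial, dotProduct_smul, dotProduct_comm] at hps
  simp only [smul_eq_mul] at hps
  linarith

/-! ### Newton's inequalities and signs of coefficients -/

/-- By Rolle's theorem, counting multiplicities. -/
lemma derivative_splits_real {p : ℝ[X]} (hp : p.Splits) : (derivative p).Splits := by
  rw [splits_iff_card_roots] at hp ⊢
  have h1 := card_roots_le_derivative p
  have h2 := card_roots' (derivative p)
  have h3 := natDegree_derivative_le p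
  by_cases h0 : p.natDegree = 0
  · omega
  · omega

/-- With `E = ∑ (-1/r)` and `F = ∑ 1/r²` over the roots `r`, the first three coefficients of
`∏ (X - r)` are governed by `E` and `F`, and `E² ≤ |s| F` is the Cauchy–Schwarz inequality. -/
lemma newton_prod (s : Multiset ℝ) (h0 : ((s.map fun r => X - C r).prod).coeff 0 ≠ 0) :
    ∃ E F : ℝ, ((s.map fun r => X - C r).prod).coeff 1
        = ((s.map fun r => X - C r).prod).coeff 0 * E ∧
      2 * ((s.map fun r => X - C r).prod).coeff 2
        = ((s.map fun r => X - C r).prod).coeff 0 * (E ^ 2 - F) ∧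
      E ^ 2 ≤ Multiset.card s * F := by
  induction s using Multiset.induction_on with
  | empty => exact ⟨0, 0, by simp [coeff_one]⟩
  | cons r s ih =>
    simp only [Multiset.map_cons, Multiset.prod_cons, Multiset.card_cons] at h0 ⊢
    set q := (s.map fun r => X - C r).prod with hq
    have c0 : ((X - C r) * q).coeff 0 = -r * q.coeff 0 := by simp [mul_coeff_zero]
    have c1 : ((X - C r) * q).coeff 1 = q.coeff 0 - r * q.coeff 1 := by
      simp [sub_mul, coeff_X_mul]
    have c2 : ((X - C r) * q).coeff 2 = q.coeff 1 - r * q.coeff 2 := by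
      simp [sub_mul, coeff_X_mul]
    rw [c0] at h0
    have hr : r ≠ 0 := by rintro rfl; simp at h0
    obtain ⟨E, F, h1, h2, h3⟩ := ih (right_ne_zero_of_mul h0)
    refine ⟨E - r⁻¹, F + (r⁻¹) ^ 2, ?_, ?_, ?_⟩
    · rw [c0, c1, h1]; field_simp; ring
    · rw [c0, c2, mul_sub, show 2 * (r * q.coeff 2) = r * (2 * q.coeff 2) by ring, h2, h1]
      field_simp; ring
    · push_cast
      set t := r⁻¹
      set n : ℝ := (Multiset.card s : ℝ) with hn
      rcases Nat.eq_zero_or_pos (Multiset.card s) with hz | hpos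
      · have : n = 0 := by simp [hn, hz]
        have hs : s = 0 := Multiset.card_eq_zero.mp hz
        rw [this] at h3 ⊢
        have hE : E = 0 := by nlinarith [sq_nonneg E]
        have hq1 : q = 1 := by simp [hq, hs]
        have hF : F = 0 := by
          rw [hq1, hE] at h2
          simp [coeff_one] at h2
          exact h2
        simp [hE, hF]
      · have hn1 : 0 < n := by simpa [hn] using hpos
        have : 0 ≤ n * (F + 2 * E * t + n * t ^ 2) := by nlinarith [sq_nonneg (E + n * t)]
        have := nonneg_of_mul_nonneg_right this hn1
        nlinarith

/-- Newton's inequality between the coefficients of index `0`, `1`, `2`. -/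
lemma newton_one {p : ℝ[X]} (hp : p.Splits) :
    2 * p.natDegree * (p.coeff 0 * p.coeff 2) ≤ (p.natDegree - 1 : ℝ) * p.coeff 1 ^ 2 := by
  rcases Nat.eq_zero_or_pos p.natDegree with hz | hpos
  · rw [coeff_eq_zero_of_natDegree_lt (n := 1) (by omega)]; simp [hz]
  by_cases h0 : p.coeff 0 = 0
  · have : (1 : ℝ) ≤ p.natDegree := by exact_mod_cast hpos
    rw [h0]; nlinarith [mul_nonneg (sub_nonneg.2 this) (sq_nonneg (p.coeff 1))]
  have hfac := hp.eq_prod_roots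
  have hcard := hp.natDegree_eq_card_roots
  set a := p.leadingCoeff
  set q := (p.roots.map fun r => X - C r).prod with hq
  have hc : ∀ k, p.coeff k = a * q.coeff k := fun k => by
    conv_lhs => rw [hfac]
    simp
  rw [hc] at h0
  obtain ⟨E, F, h1, h2, h3⟩ := newton_prod p.roots (right_ne_zero_of_mul h0)
  rw [← hq] at h1 h2
  rw [hc, hc, hc, hcard, h1]
  have : 2 * (Multiset.card p.roots : ℝ) * (a * q.coeff 0 * (a * q.coeff 2))
    = (a * q.coeff 0) ^ 2 * (Multiset.card p.roots * (E ^ 2 - F)) := by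
    linear_combination (Multiset.card p.roots : ℝ) * a ^ 2 * q.coeff 0 * h2
  rw [this]
  nlinarith [mul_le_mul_of_nonneg_left h3 (sq_nonneg (a * q.coeff 0))]

/-- **Newton's inequalities** for a real-rooted polynomial, with no sign condition on the
coefficients: apply `newton_one` to the `k`-th derivative. -/
lemma newton_coeff {p : ℝ[X]} (hp : p.Splits) (k : ℕ) (hk : k + 1 ≤ p.natDegree) :
    (k + 2) * (p.natDegree - k : ℝ) * (p.coeff k * p.coeff (k + 2))
      ≤ (k + 1) * (p.natDegree - k - 1 : ℝ) * p.coeff (k + 1) ^ 2 := by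
  induction k generalizing p with
  | zero => have := newton_one hp; simp at this ⊢; linarith
  | succ k ih =>
    have hd : (derivative p).natDegree = p.natDegree - 1 :=
      natDegree_derivative p
    have := ih (derivative_splits_real hp) (by omega)
    rw [hd, Nat.cast_sub (by omega)] at this
    simp only [coeff_derivative] at this
    push_cast at this ⊢
    have e : k + 2 + 1 = k + 1 + 2 := rfl
    have hpos : (0 : ℝ) < (k + 1) * (k + 2) := by positivity
    rw [e] at this
    refine le_of_mul_le_mul_left ?_ hpos
    linarith
  
lemma natDegree_prod_X_add_C (s : Multiset ℝ) :
    ((s.map fun μ => X + C μ).prod).natDegree = Multiset.card s := by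
  have := natDegree_multiset_prod_X_sub_C_eq_card (s.map fun μ => -μ)
  simpa [Multiset.map_map, Function.comp_def, sub_eq_add_neg] using this

lemma coeff_pos_prod (s : Multiset ℝ) (hs : ∀ μ ∈ s, 0 < μ) (k : ℕ) (hk : k ≤ Multiset.card s) :
    0 < ((s.map fun μ => X + C μ).prod).coeff k := by
  induction s using Multiset.induction_on generalizing k with
  | empty => simp at hk; simp [hk]
  | cons r s ih =>
    simp only [Multiset.map_cons, Multiset.prod_cons, Multiset.card_cons] at hk ⊢
    have hr := hs r (by simp)
    have hs' : ∀ μ ∈ s, 0 < μ := fun μ h => hs μ (by simp [h])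
    have hnn : ∀ k, 0 ≤ ((s.map fun μ => X + C μ).prod).coeff k := fun k => by
      rcases le_or_gt k (Multiset.card s) with h | h
      · exact (ih hs' k h).le
      · rw [coeff_eq_zero_of_natDegree_lt]
        rwa [natDegree_prod_X_add_C]
    cases k with
    | zero => simp only [mul_coeff_zero]; simp; exact mul_pos hr (by simpa [coeff_zero_eq_eval_zero] using ih hs' 0 (by simp))
    | succ k =>
      rw [add_mul, coeff_add, coeff_X_mul, coeff_C_mul]
      exact add_pos_of_pos_of_nonneg (ih hs' k (by omega)) (mul_nonneg hr.le (hnn _))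

/-- If a polynomial has the negative roots `-μ` for `μ ∈ s` and one further root, equal to `∑ μ`,
then all its coefficients of index below `|s|` have the same sign. The induction adds one `μ = r` by
`(σ + r - X)(X + r) = X(σ - X) + (rσ + r²)`. -/
lemma coeff_pos_sum_sub_mul_prod (s : Multiset ℝ) (hs : ∀ μ ∈ s, 0 < μ) :
    (∀ k < Multiset.card s, 0 < ((C s.sum - X) * (s.map fun μ => X + C μ).prod).coeff k) ∧
    ((C s.sum - X) * (s.map fun μ => X + C μ).prod).coeff (Multiset.card s) = 0 := by
  induction s using Multiset.induction_on with
  | empty => simp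
  | cons r s ih =>
    have hr := hs r (by simp)
    have hs' : ∀ μ ∈ s, 0 < μ := fun μ h => hs μ (by simp [h])
    obtain ⟨h1, h2⟩ := ih hs'
    have hσ : 0 ≤ s.sum := Multiset.sum_nonneg fun μ h => (hs' μ h).le
    simp only [Multiset.map_cons, Multiset.prod_cons, Multiset.card_cons, Multiset.sum_cons]
    have hid : (C (r + s.sum) - X) * ((X + C r) * (s.map fun μ => X + C μ).prod)
        = X * ((C s.sum - X) * (s.map fun μ => X + C μ).prod)
          + C (r * s.sum + r ^ 2) * (s.map fun μ => X + C μ).prod := by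
      simp only [C_add, C_mul, C_pow]; ring
    rw [hid]
    have hc : 0 < r * s.sum + r ^ 2 := by positivity
    constructor
    · intro k hk
      have hp := mul_pos hc (coeff_pos_prod s hs' k (by omega))
      rw [coeff_add, coeff_C_mul]
      cases k with
      | zero => simpa [mul_coeff_zero] using hp
      | succ k => rw [coeff_X_mul]; exact add_pos (h1 k (by omega)) hp
    · rw [coeff_add, coeff_C_mul, coeff_X_mul, h2,
        coeff_eq_zero_of_natDegree_lt (p := (s.map fun μ => X + C μ).prod)]
      · simp
      · simp [natDegree_prod_X_add_C]

/-! ### The characteristic polynomial of the distance matrix -/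

lemma distMatrix_isHermitian (G : SimpleGraph (Fin n)) : (distMatrix G).IsHermitian := by
  rw [IsHermitian, conjTranspose_eq_transpose_of_trivial, distMatrix_transpose]

/-- The distance matrix of a tree has at most one positive eigenvalue: the span of two orthonormal
eigenvectors contains a nonzero vector of zero sum, contradicting `dist_quadratic`. -/
lemma eigenvalue_unique_pos {G : SimpleGraph (Fin n)} [DecidableRel G.Adj] (hG : G.IsTree)
    {i j : Fin n} (hij : i ≠ j) (hi : 0 < (distMatrix_isHermitian G).eigenvalues i)
    (hj : 0 < (distMatrix_isHermitian G).eigenvalues j) : False := by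
  set hA := distMatrix_isHermitian G
  have hdot : ∀ k l, (hA.eigenvectorBasis k : Fin n → ℝ) ⬝ᵥ (hA.eigenvectorBasis l : Fin n → ℝ)
      = if k = l then 1 else 0 := by
    intro k l
    rw [← orthonormal_iff_ite.1 hA.eigenvectorBasis.orthonormal k l, dotProduct_comm]
    simp [PiLp.inner_apply, dotProduct]
  have hmul := fun k => hA.mulVec_eigenvectorBasis k
  generalize (hA.eigenvectorBasis : Fin n → EuclideanSpace ℝ (Fin n)) = B at hdot hmul
  set u : Fin n → ℝ := (B i : Fin n → ℝ) with hu
  set v : Fin n → ℝ := (B j : Fin n → ℝ) with hv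
  have huu : u ⬝ᵥ u = 1 := by rw [hu, hdot, if_pos rfl]
  have hvv : v ⬝ᵥ v = 1 := by rw [hv, hdot, if_pos rfl]
  have huv : u ⬝ᵥ v = 0 := by rw [hu, hv, hdot, if_neg hij]
  have hvu : v ⬝ᵥ u = 0 := by rw [dotProduct_comm, huv]
  have hDu : distMatrix G *ᵥ u = hA.eigenvalues i • u := hmul i
  have hDv : distMatrix G *ᵥ v = hA.eigenvalues j • v := hmul j
  set a := ∑ x, u x with ha
  set b := ∑ x, v x with hb
  have hq := dist_quadratic hG (b • u - a • v) (by
    simp only [Pi.sub_apply, Pi.smul_apply, smul_eq_mul, sum_sub_distrib, ← mul_sum]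
    rw [← ha, ← hb]; ring)
  rw [mulVec_sub, mulVec_smul, mulVec_smul, hDu, hDv] at hq
  simp only [sub_dotProduct, dotProduct_sub, smul_dotProduct, dotProduct_smul, huu, hvv, huv, hvu,
    smul_eq_mul] at hq
  have ha0 : a = 0 := by
    by_contra h
    nlinarith [mul_pos hj (sq_pos_of_ne_zero h), mul_nonneg hi.le (sq_nonneg b)]
  have hq' := dist_quadratic hG u ha0
  rw [hDu, dotProduct_smul, huu, smul_eq_mul] at hq'
  linarith

/-- There is exactly one positive eigenvalue, and since the trace is `0` it is minus the sum of the
others, so `coeff_pos_sum_sub_mul_prod` applies. -/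
lemma charpoly_coeff_neg (hn : 3 ≤ n) {G : SimpleGraph (Fin n)} [DecidableRel G.Adj]
    (hG : G.IsTree) (k : ℕ) (hk : k < n - 1) : (distMatrix G).charpoly.coeff k < 0 := by
  set hA := distMatrix_isHermitian G
  have htr : ∑ i, hA.eigenvalues i = 0 := by
    have := hA.trace_eq_sum_eigenvalues
    simp only [RCLike.ofReal_real_eq_id, id] at this
    rw [← this]
    simp [trace, distMatrix]
  have hdet : (distMatrix G).det ≠ 0 := fun h => by
    have := congrArg det (dist_mul_distInv hn hG)
    rw [det_mul, h] at this
    simp at this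
  have hne : ∀ i, hA.eigenvalues i ≠ 0 := fun i h => hdet (by
    rw [hA.det_eq_prod_eigenvalues]
    exact prod_eq_zero (mem_univ i) (by simp [h]))
  obtain ⟨i₀, hi₀⟩ : ∃ i, 0 < hA.eigenvalues i := by
    by_contra! h
    have hz := (sum_eq_zero_iff_of_nonpos fun i _ => h i).1 htr
    exact hne ⟨0, by omega⟩ (hz _ (mem_univ _))
  set s : Multiset ℝ := (univ.erase i₀).val.map fun i => -hA.eigenvalues i with hs
  have hspos : ∀ μ ∈ s, 0 < μ := by
    intro μ hμ
    obtain ⟨i, hi, rfl⟩ := Multiset.mem_map.1 hμ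
    have hii : i ≠ i₀ := (mem_erase.1 (mem_def.2 hi)).1
    have h1 : ¬ 0 < hA.eigenvalues i := fun h => eigenvalue_unique_pos hG hii h hi₀
    have h2 := hne i
    have : hA.eigenvalues i < 0 := lt_of_le_of_ne (not_lt.1 h1) h2
    linarith
  have hcard : Multiset.card s = n - 1 := by simp [hs]
  have hsum : s.sum = hA.eigenvalues i₀ := by
    have h1 : s.sum = ∑ i ∈ univ.erase i₀, -hA.eigenvalues i := rfl
    rw [← add_sum_erase _ _ (mem_univ i₀)] at htr
    rw [h1, sum_neg_distrib]; linarith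
  have hprod : (s.map fun μ => X + C μ).prod
      = ∏ i ∈ univ.erase i₀, (X - C (hA.eigenvalues i)) := by
    rw [hs, Multiset.map_map, Finset.prod]
    congr 1
    exact Multiset.map_congr rfl fun i _ => by simp [sub_eq_add_neg]
  have hchar : (distMatrix G).charpoly = -((C s.sum - X) * (s.map fun μ => X + C μ).prod) := by
    rw [hA.charpoly_eq, hprod, hsum, ← mul_prod_erase _ _ (mem_univ i₀)]
    simp only [RCLike.ofReal_real_eq_id, id]
    ring
  rw [hchar, coeff_neg]
  have := (coeff_pos_sum_sub_mul_prod s hspos).1 k (by omega)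
  linarith

lemma deltaPoly_eq (G : SimpleGraph (Fin n)) :
    deltaPoly G = C ((-1) ^ n) * (distMatrix G).charpoly := by
  have : (distMatrix G).map C - (X : ℝ[X]) • (1 : Matrix (Fin n) (Fin n) ℝ[X])
      = -(charmatrix (distMatrix G)) := by
    ext1 i j
    by_cases hij : i = j
    · subst hij; simp [charmatrix_apply_eq]
    · simp [hij]
  rw [deltaPoly, this, det_neg, charpoly]
  simp

/-! ### The peak location -/

/-- Multiplying Newton's inequalities for the indices `1, …, k` bounds `a (k+1) / a k` by
`(n - k) / ((k + 1) n) · a 1 / a 0`. -/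
lemma ratio_bound {a : ℕ → ℝ} (hpos : ∀ k < n - 1, 0 < a k)
    (hnewton : ∀ k, k + 1 ≤ n →
      (k + 2) * (n - k : ℝ) * (a k * a (k + 2)) ≤ (k + 1) * (n - k - 1 : ℝ) * a (k + 1) ^ 2)
    (k : ℕ) (hk : k + 1 < n - 1) :
    (k + 1) * n * (a (k + 1) * a 0) ≤ (n - k : ℝ) * (a 1 * a k) := by
  induction k with
  | zero => simp
  | succ k ih =>
    have ih := ih (by omega)
    have hN := hnewton k (by omega)
    have p0 := hpos k (by omega)
    have p1 := hpos (k + 1) (by omega)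
    have p00 := hpos 0 (by omega)
    have hkn : (k : ℝ) + 3 ≤ n := by exact_mod_cast (by omega : k + 3 ≤ n)
    push_cast
    refine le_of_mul_le_mul_left ?_ (mul_pos (by linarith : (0 : ℝ) < n - k) p0)
    calc (n - k : ℝ) * a k * ((k + 1 + 1) * n * (a (k + 1 + 1) * a 0))
        = n * a 0 * ((k + 2) * (n - k : ℝ) * (a k * a (k + 2))) := by ring
      _ ≤ n * a 0 * ((k + 1) * (n - k - 1 : ℝ) * a (k + 1) ^ 2) := by gcongr
      _ = (n - k - 1) * a (k + 1) * ((k + 1) * n * (a (k + 1) * a 0)) := by ring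
      _ ≤ (n - k - 1) * a (k + 1) * ((n - k : ℝ) * (a 1 * a k)) :=
          mul_le_mul_of_nonneg_left ih (mul_nonneg (by linarith) p1.le)
      _ = _ := by ring

/-- The numerical contradiction, with `x = n`: after clearing denominators, the assumptions force
`(3 - 3ρ)(n - 1) + 4 ≤ 0`. -/
lemma final_arith {x N ρ m : ℝ} (hx : 3 ≤ x) (hρ1 : ρ ≤ 1)
    (hN : ρ * ((x - 1) * (x - 2) / 2) ≤ N) (hmx : m ≤ x)
    (hm : (2 - ρ) / (3 - ρ) * x + 1 ≤ m)
    (h : m * x * (x - 1) ≤ 2 * (x - m + 1) * (x ^ 2 - x - 2 - N)) : False := by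
  have h3 : 0 < 3 - ρ := by linarith
  have hy : (3 - ρ) * (x - m + 1) ≤ x := by
    have := mul_le_mul_of_nonneg_left hm h3.le
    have e : (3 - ρ) * ((2 - ρ) / (3 - ρ) * x + 1) = (2 - ρ) * x + (3 - ρ) := by field_simp
    linarith
  obtain ⟨y, rfl⟩ : ∃ y, m = x + 1 - y := ⟨x + 1 - m, by ring⟩
  have hy1 : 0 < y := by linarith
  have e : x - (x + 1 - y) + 1 = y := by ring
  rw [e] at h hy
  have h2 : (x + 1) * x * (x - 1) ≤ y * ((x - 1) * ((3 - ρ) * x + 2 * ρ) - 4) := by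
    nlinarith [mul_le_mul_of_nonneg_left hN hy1.le]
  have hpos : 0 < (x - 1) * ((3 - ρ) * x + 2 * ρ) - 4 := by
    have : 0 < y * ((x - 1) * ((3 - ρ) * x + 2 * ρ) - 4) :=
      lt_of_lt_of_le (by have : 0 < x - 1 := by linarith
                         positivity) h2
    exact pos_of_mul_pos_right this hy1.le
  have h4 := mul_le_mul_of_nonneg_left h2 h3.le
  have h5 := mul_le_mul_of_nonneg_right hy hpos.le
  have h6 : x * ((3 - 3 * ρ) * (x - 1) + 4) ≤ 0 := by nlinarith
  have h7 : 0 ≤ (3 - 3 * ρ) * (x - 1) := mul_nonneg (by linarith) (by linarith)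
  nlinarith

end TreeDistance

open TreeDistance Matrix Polynomial in
/-- If a tree `T` on `n ≥ 3` vertices has at least `ρ C(n-1,2)` paths of
length 2 (the number of paths of length 2 being `∑_v C(deg v, 2)`), where
`0 ≤ ρ ≤ 1`, then every index `m` at which the normalized coefficient sequence
`d_0(T), ..., d_{n-2}(T)` attains its maximum satisfies
`m ≤ ⌈((2-ρ)/(3-ρ)) n⌉`. -/
theorem peak_upper_bound_tree (n : ℕ) (hn : 3 ≤ n)
    (G : SimpleGraph (Fin n)) [DecidableRel G.Adj] (hG : G.IsTree)
    (ρ : ℝ) (hρ0 : 0 ≤ ρ) (hρ1 : ρ ≤ 1)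
    (hpaths : ρ * ((n - 1).choose 2 : ℝ) ≤ ((∑ v : Fin n, (G.degree v).choose 2 : ℕ) : ℝ)) :
    ∀ m ≤ n - 2, (∀ i ≤ n - 2, normCoeff G i ≤ normCoeff G m) →
      (m : ℤ) ≤ ⌈((2 - ρ) / (3 - ρ)) * (n : ℝ)⌉ := by
  intro m hm hmax
  by_contra! hlt
  have hnR : (3 : ℝ) ≤ n := by exact_mod_cast hn
  have hm1 : (2 - ρ) / (3 - ρ) * (n : ℝ) + 1 ≤ m := by
    have h1 := Int.le_ceil ((2 - ρ) / (3 - ρ) * (n : ℝ))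
    have h2 : ((⌈((2 - ρ) / (3 - ρ)) * (n : ℝ)⌉ : ℤ) : ℝ) + 1 ≤ m := by exact_mod_cast hlt
    linarith
  obtain ⟨k, rfl⟩ : ∃ k, m = k + 1 := by
    refine ⟨m - 1, ?_⟩
    have h0 : 0 ≤ (2 - ρ) / (3 - ρ) * (n : ℝ) :=
      mul_nonneg (div_nonneg (by linarith) (by linarith)) (by linarith)
    have : (1 : ℝ) ≤ m := by linarith
    have : 1 ≤ m := by exact_mod_cast this
    omega
  set p := (distMatrix G).charpoly with hp
  have hdeg : p.natDegree = n := by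
    rw [hp, charpoly_natDegree_eq_dim, Fintype.card_fin]
  have hpos : ∀ k < n - 1, 0 < -p.coeff k := fun k hk => by
    have := charpoly_coeff_neg hn hG k hk
    linarith
  have hN := fun k hk => newton_coeff (distMatrix_isHermitian G).splits_charpoly k hk
  rw [← hp, hdeg] at hN
  have hratio := ratio_bound (a := fun k => -p.coeff k) hpos
    (fun k hk => by have := hN k hk; simpa using this) k (by omega)
  have habs : ∀ k < n - 1, |(deltaPoly G).coeff k| = -p.coeff k := fun k hk => by
    rw [deltaPoly_eq, coeff_C_mul, abs_mul, abs_pow, abs_neg, abs_one, one_pow, one_mul,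
      abs_of_neg (by linarith [hpos k hk])]
  have hstep : -p.coeff k ≤ 2 * -p.coeff (k + 1) := by
    have h := hmax k (by omega)
    rw [normCoeff, normCoeff, habs k (by omega), habs (k + 1) (by omega), pow_succ, div_mul_eq_mul_div,
      div_mul_eq_mul_div, div_le_div_iff_of_pos_right (by positivity), mul_assoc] at h
    exact le_of_mul_le_mul_left h (by positivity)
  have hc : -p.coeff 1 = -(-p.coeff 0) * (distInv G).trace := by
    have h := deltaPoly_coeff hn hG
    rw [deltaPoly_eq, coeff_C_mul, coeff_C_mul] at h
    have hs : ((-1 : ℝ) ^ n) ≠ 0 := by simp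
    apply mul_left_cancel₀ hs
    linear_combination -h
  have htr := trace_distInv hn hG
  have p0 := hpos 0 (by omega)
  have pk := hpos (k + 1) (by omega)
  have p1 := hpos 1 (by omega)
  have hkn : (k : ℝ) + 3 ≤ n := by exact_mod_cast (by omega : k + 3 ≤ n)
  generalize -p.coeff 0 = a0 at *
  generalize -p.coeff 1 = a1 at *
  generalize -p.coeff (k + 1) = b at *
  generalize -p.coeff k = c at *
  generalize ((∑ v : Fin n, (G.degree v).choose 2 : ℕ) : ℝ) = N at *
  have hch : ((n - 1).choose 2 : ℝ) = ((n : ℝ) - 1) * (n - 2) / 2 := by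
    rw [Nat.cast_choose_two, Nat.cast_sub (by omega)]; push_cast; ring
  rw [hch] at hpaths
  push_cast at hm1
  refine final_arith hnR hρ1 hpaths (by linarith : (k : ℝ) + 1 ≤ n) hm1 ?_
  have h1 : (k + 1) * n * a0 ≤ 2 * (n - k : ℝ) * a1 := by
    refine le_of_mul_le_mul_left ?_ pk
    have := mul_le_mul_of_nonneg_left hstep (mul_nonneg (by linarith : (0 : ℝ) ≤ n - k) p1.le)
    linarith
  have h2 : (n - 1 : ℝ) * a1 = a0 * (n ^ 2 - n - 2 - N) := by
    rw [hc]; linear_combination -a0 * htr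
  refine le_of_mul_le_mul_left ?_ p0
  have := mul_le_mul_of_nonneg_left h1 (by linarith : (0 : ℝ) ≤ n - 1)
  nlinarith
end

section
/- Let T be a tree on n ≥ 3 vertices. Then every index m at which the sequence of normalized coefficients d_0(T), d_1(T), ..., d_{n−2}(T) attains its maximum satisfies m ≤ ⌈(2/3)·n⌉. -/
open Polynomial

/-! ### Newton inequalities -/

/-- The derivative of a real-rooted polynomial is real-rooted (Rolle, counted with multiplicities). -/
theorem splits_derivative {f : ℝ[X]} (hf : f.Splits) : (derivative f).Splits := by
  rw [splits_iff_card_roots] at hf ⊢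
  have h1 := card_roots_le_derivative f
  have h2 := natDegree_derivative_le f
  have h3 := card_roots' (derivative f)
  omega

/-- Cauchy–Schwarz for the sum of the inverses. -/
theorem sq_sum_inv_le (s : Multiset ℝ) :
    (s.map fun r => r⁻¹).sum ^ 2 ≤ (s.card : ℝ) * (s.map fun r => r⁻¹ ^ 2).sum := by
  induction s using Multiset.induction_on with
  | empty => simp
  | cons a s ih =>
    simp only [Multiset.map_cons, Multiset.sum_cons, Multiset.card_cons, Nat.cast_add,
      Nat.cast_one]
    rcases Nat.eq_zero_or_pos s.card with h0 | h0
    · rw [Multiset.card_eq_zero] at h0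
      subst h0; simp
    have hpos : (0 : ℝ) < s.card := by exact_mod_cast h0
    have key : 2 * a⁻¹ * (s.map fun r => r⁻¹).sum ≤
        s.card * a⁻¹ ^ 2 + (s.map fun r => r⁻¹ ^ 2).sum := by
      refine le_of_mul_le_mul_left ?_ hpos
      nlinarith [sq_nonneg (s.card * a⁻¹ - (s.map fun r => r⁻¹).sum)]
    nlinarith

/-- The coefficients of degree 1 and 2 of `∏ (X - r)` in terms of the power sums of the `r⁻¹`. -/
theorem coeff_prod_X_sub_C (s : Multiset ℝ) (hs : (0 : ℝ) ∉ s) :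
    let q := (s.map fun r => X - C r).prod
    q.coeff 1 = - q.coeff 0 * (s.map fun r => r⁻¹).sum ∧
    2 * q.coeff 2 = q.coeff 0 *
      ((s.map fun r => r⁻¹).sum ^ 2 - (s.map fun r => r⁻¹ ^ 2).sum) := by
  induction s using Multiset.induction_on with
  | empty => simp [coeff_one]
  | cons a s ih =>
    simp only [Multiset.mem_cons, not_or] at hs
    obtain ⟨h1, h2⟩ := ih hs.2
    have ha : a ≠ 0 := fun h => hs.1 h.symm
    simp only [Multiset.map_cons, Multiset.prod_cons, Multiset.sum_cons, sub_mul, coeff_sub,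
      coeff_C_mul, coeff_X_mul, coeff_X_mul_zero]
    refine ⟨?_, ?_⟩
    · rw [h1]; field_simp; ring
    · rw [mul_sub, mul_left_comm, h2, h1]; field_simp; ring

/-- Laguerre's inequality at `0`, with the sharp constant depending on the degree: it is
Cauchy–Schwarz for the inverses of the roots. -/
theorem laguerre_zero {f : ℝ[X]} (hf : f.Splits) (hpos : 0 < f.natDegree) :
    2 * (f.natDegree : ℝ) * (f.coeff 0 * f.coeff 2) ≤ ((f.natDegree : ℝ) - 1) * f.coeff 1 ^ 2 := by
  have hN : (1 : ℝ) ≤ f.natDegree := by exact_mod_cast hpos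
  by_cases h0 : f.coeff 0 = 0
  · rw [h0]
    have : 0 ≤ ((f.natDegree : ℝ) - 1) * f.coeff 1 ^ 2 :=
      mul_nonneg (by linarith) (sq_nonneg _)
    linarith
  have hroot : (0 : ℝ) ∉ f.roots := fun h =>
    h0 (by rw [coeff_zero_eq_eval_zero]; exact (mem_roots'.1 h).2)
  obtain ⟨h1, h2⟩ := coeff_prod_X_sub_C f.roots hroot
  have hcs := sq_sum_inv_le f.roots
  rw [splits_iff_card_roots.1 hf] at hcs
  have e : ∀ k, f.coeff k = f.leadingCoeff * ((f.roots.map fun r => X - C r).prod).coeff k :=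
    fun k => by rw [← coeff_C_mul, ← hf.eq_prod_roots]
  rw [e 0, e 1, e 2, h1]
  set q0 := ((f.roots.map fun r => X - C r).prod).coeff 0
  set S1 := (f.roots.map fun r => r⁻¹).sum
  set S2 := (f.roots.map fun r => r⁻¹ ^ 2).sum
  set N := (f.natDegree : ℝ)
  have : 2 * N * (f.leadingCoeff * q0 * (f.leadingCoeff *
      ((f.roots.map fun r => X - C r).prod).coeff 2)) =
      N * (f.leadingCoeff * q0) ^ 2 * (S1 ^ 2 - S2) := by
    linear_combination N * f.leadingCoeff ^ 2 * q0 * h2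
  rw [this]
  nlinarith [mul_nonneg (sq_nonneg (f.leadingCoeff * q0)) (sub_nonneg.2 hcs)]

/-- Newton's inequalities for the coefficients of a real-rooted polynomial, obtained from
`laguerre_zero` applied to the `k`-th derivative. -/
theorem newton (k : ℕ) : ∀ {f : ℝ[X]} (_ : f.Splits) {n : ℕ} (_ : f.natDegree = n) (_ : k < n),
    ((n : ℝ) - k) * (k + 2) * (f.coeff k * f.coeff (k + 2)) ≤
      ((n : ℝ) - k - 1) * (k + 1) * f.coeff (k + 1) ^ 2 := by
  induction k with
  | zero =>
    intro f hf n hn hk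
    have := laguerre_zero hf (by omega)
    rw [hn] at this
    simp only [Nat.cast_zero, zero_add]
    linarith
  | succ k ih =>
    intro f hf n hn hk
    have hd : (derivative f).natDegree = n - 1 := by
      rw [← hn]; exact natDegree_derivative f
    have := ih (splits_derivative hf) hd (by omega)
    simp only [coeff_derivative] at this
    rw [Nat.cast_sub (by omega : 1 ≤ n)] at this
    push_cast at this ⊢
    have hp : (0 : ℝ) < (k + 1) * (k + 2) := by positivity
    refine le_of_mul_le_mul_left ?_ hp
    rw [show k + 1 + 2 = k + 2 + 1 by ring]
    linear_combination this

/-! ### Signs of the coefficients -/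

/-- For positive `a ∈ s`, the polynomial `(∑ a - X) ∏ (X + a)` has positive coefficients below degree
`s.card` and coefficient `0` in degree `s.card`.  The claims on `∏ (X + a)` are needed for the
induction. -/
theorem sign_coeff (s : Multiset ℝ) (hs : ∀ a ∈ s, 0 < a) :
    let Q := (s.map fun a => X + C a).prod
    let P := (C s.sum - X) * Q
    (∀ k ≤ s.card, 0 < Q.coeff k) ∧ (∀ k, s.card < k → Q.coeff k = 0) ∧
    (∀ k < s.card, 0 < P.coeff k) ∧ P.coeff s.card = 0 := by
  induction s using Multiset.induction_on with
  | empty => simp +contextual [coeff_one, Nat.pos_iff_ne_zero]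
  | cons a s ih =>
    have ha : 0 < a := hs a (Multiset.mem_cons_self a s)
    obtain ⟨h1, h2, h3, h4⟩ := ih fun b hb => hs b (Multiset.mem_cons_of_mem hb)
    simp only [Multiset.map_cons, Multiset.prod_cons, Multiset.sum_cons, Multiset.card_cons]
    set Q := (s.map fun a => X + C a).prod
    set P := (C s.sum - X) * Q with hP
    have hQs : ∀ k, ((X + C a) * Q).coeff (k + 1) = Q.coeff k + a * Q.coeff (k + 1) :=
      fun k => by rw [add_mul, coeff_add, coeff_X_mul, coeff_C_mul]
    have hQ0 : ((X + C a) * Q).coeff 0 = a * Q.coeff 0 := by simp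
    have hPP : (C (a + s.sum) - X) * ((X + C a) * Q) = (X + C a) * P + C a * ((X + C a) * Q) := by
      rw [hP, C_add]; ring
    have hPs : ∀ k, ((C (a + s.sum) - X) * ((X + C a) * Q)).coeff (k + 1) =
        P.coeff k + a * P.coeff (k + 1) + a * (Q.coeff k + a * Q.coeff (k + 1)) :=
      fun k => by rw [hPP, coeff_add, coeff_C_mul, hQs, add_mul, coeff_add, coeff_X_mul,
        coeff_C_mul]
    have hP0 : ((C (a + s.sum) - X) * ((X + C a) * Q)).coeff 0 =
        a * P.coeff 0 + a * (a * Q.coeff 0) := by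
      rw [hPP, coeff_add, coeff_C_mul, hQ0]; simp
    have hPn : ∀ k ≤ s.card, 0 ≤ P.coeff k := fun k hk => by
      rcases hk.lt_or_eq with h | h
      · exact (h3 k h).le
      · rw [h, h4]
    have hQn : ∀ k, 0 ≤ Q.coeff k := fun k => by
      rcases le_or_gt k s.card with h | h
      · exact (h1 k h).le
      · rw [h2 k h]
    refine ⟨?_, ?_, ?_, ?_⟩
    · rintro (_ | k) hk
      · rw [hQ0]; exact mul_pos ha (h1 0 (Nat.zero_le _))
      · rw [hQs]
        have := h1 k (by omega)
        have := mul_nonneg ha.le (hQn (k + 1))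
        linarith
    · rintro (_ | k) hk
      · omega
      · rw [hQs, h2 k (by omega), h2 (k + 1) (by omega)]; ring
    · rintro (_ | k) hk
      · rw [hP0]
        have := mul_nonneg ha.le (hPn 0 (Nat.zero_le _))
        have := mul_pos ha (mul_pos ha (h1 0 (Nat.zero_le _)))
        linarith
      · rw [hPs]
        have := hPn k (by omega)
        have := mul_nonneg ha.le (hPn (k + 1) (by omega))
        have := mul_pos ha (h1 k (by omega))
        have := mul_nonneg ha.le (mul_nonneg ha.le (hQn (k + 1)))
        linarith
    · have : P.coeff (s.card + 1) = - Q.coeff s.card := by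
        rw [hP, sub_mul, coeff_sub, coeff_C_mul, coeff_X_mul, h2 _ (Nat.lt_succ_self _)]; ring
      rw [hPs, h4, this, h2 _ (Nat.lt_succ_self _)]; ring

/-! ### The distance matrix of a tree -/

open scoped Classical in
/-- The vector `τ i = 2 - deg i`, which spans the preimage of the constants under the distance
matrix of a tree. -/
noncomputable def tauVec {n : ℕ} (G : SimpleGraph (Fin n)) : Fin n → ℝ :=
  fun i => 2 - G.degree i

open SimpleGraph in
/-- In a tree, exactly one neighbour `p` of `i` is closer to `j ≠ i`; the others are farther. -/
theorem exists_parent {n : ℕ} {G : SimpleGraph (Fin n)} (hG : G.IsTree) {i j : Fin n}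
    (hij : i ≠ j) : ∃ p, G.Adj i p ∧ G.dist p j + 1 = G.dist i j ∧
      ∀ k, G.Adj i k → k ≠ p → G.dist k j = G.dist i j + 1 := by
  obtain ⟨w, hw⟩ := hG.connected.exists_walk_length_eq_dist i j
  cases w with
  | nil => exact absurd rfl hij
  | @cons _ p _ h w =>
    have hwl := hw
    rw [Walk.length_cons] at hwl
    have hpath := Walk.isPath_of_length_eq_dist _ hw
    have hd : G.dist p j + 1 = G.dist i j := by
      have h1 := dist_le w
      have h2 := hG.dist_eq_dist_add_one_of_adj j h
      rw [dist_comm (u := j) (v := i), dist_comm (u := j) (v := p)] at h2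
      omega
    refine ⟨p, h, hd, fun k hk hkp => ?_⟩
    have h2 := hG.dist_eq_dist_add_one_of_adj j hk
    rw [dist_comm (u := j) (v := i), dist_comm (u := j) (v := k)] at h2
    rcases h2 with h2 | h2
    · exfalso
      obtain ⟨w', hw'⟩ := hG.connected.exists_walk_length_eq_dist k j
      have hpath' : (Walk.cons hk w').IsPath :=
        Walk.isPath_of_length_eq_dist _ (by rw [Walk.length_cons, hw', h2])
      have := (hG.isAcyclic.subsingleton_path i j).elim ⟨_, hpath⟩ ⟨_, hpath'⟩
      have := congrArg (fun q : G.Path i j => q.1.snd) this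
      simp at this
      exact hkp this.symm
    · exact h2

open Matrix in
open scoped Classical in
/-- The Graham–Lovász identity `L D = τ 1ᵀ - 2 I`. -/
theorem lap_mul_dist {n : ℕ} {G : SimpleGraph (Fin n)} (hG : G.IsTree) :
    G.lapMatrix ℝ * distMatrix G =
      Matrix.vecMulVec (tauVec G) (fun _ => 1) - (2 : ℝ) • (1 : Matrix (Fin n) (Fin n) ℝ) := by
  ext i j
  have h1 : (G.lapMatrix ℝ * distMatrix G) i j =
      G.degree i * (G.dist i j : ℝ) - ∑ k ∈ G.neighborFinset i, (G.dist k j : ℝ) :=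
    SimpleGraph.lapMatrix_mulVec_apply G i (fun k => (G.dist k j : ℝ))
  rw [h1]
  simp only [Matrix.sub_apply, Matrix.vecMulVec_apply, Matrix.smul_apply, tauVec, mul_one,
    smul_eq_mul]
  by_cases hij : i = j
  · subst hij
    have : ∑ k ∈ G.neighborFinset i, (G.dist k i : ℝ) = ∑ k ∈ G.neighborFinset i, 1 :=
      Finset.sum_congr rfl fun k hk => by
        have : G.dist k i = 1 := SimpleGraph.dist_eq_one_iff_adj.2
          ((G.mem_neighborFinset i k).1 hk).symm
        rw [this]; simp
    rw [this]
    simp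
  · obtain ⟨p, hp, hpd, hk⟩ := exists_parent hG hij
    have hpm : p ∈ G.neighborFinset i := (G.mem_neighborFinset i p).2 hp
    have hpd' : (G.dist p j : ℝ) = G.dist i j - 1 := by
      rw [← hpd]; push_cast; ring
    have hrest : ∑ k ∈ (G.neighborFinset i).erase p, (G.dist k j : ℝ) =
        ∑ k ∈ (G.neighborFinset i).erase p, ((G.dist i j : ℝ) + 1) :=
      Finset.sum_congr rfl fun k hk' => by
        rw [Finset.mem_erase, G.mem_neighborFinset] at hk'
        rw [hk k hk'.2 hk'.1]; push_cast; ring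
    have hc : (((G.neighborFinset i).erase p).card : ℝ) = G.degree i - 1 := by
      rw [Finset.card_erase_of_mem hpm, Nat.cast_sub (Finset.card_pos.2 ⟨p, hpm⟩)]
      simp
    rw [← Finset.add_sum_erase _ _ hpm, hrest, Finset.sum_const, nsmul_eq_mul, hc, hpd',
      Matrix.one_apply_ne hij]
    ring

theorem distMatrix_symm {n : ℕ} (G : SimpleGraph (Fin n)) :
    (distMatrix G).transpose = distMatrix G := by
  ext i j; simp [distMatrix, SimpleGraph.dist_comm]

theorem distMatrix_herm {n : ℕ} (G : SimpleGraph (Fin n)) : (distMatrix G).IsHermitian := by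
  rw [Matrix.IsHermitian, Matrix.conjTranspose_eq_transpose_of_trivial, distMatrix_symm]

open Matrix in
theorem dotProduct_dist_comm {n : ℕ} (G : SimpleGraph (Fin n)) (x y : Fin n → ℝ) :
    x ⬝ᵥ (distMatrix G *ᵥ y) = y ⬝ᵥ (distMatrix G *ᵥ x) := by
  rw [dotProduct_mulVec, ← mulVec_transpose, distMatrix_symm, dotProduct_comm]

open Matrix in
open scoped Classical in
theorem lap_mulVec_dist {n : ℕ} {G : SimpleGraph (Fin n)} (hG : G.IsTree) (x : Fin n → ℝ) :
    G.lapMatrix ℝ *ᵥ (distMatrix G *ᵥ x) = (∑ i, x i) • tauVec G - (2 : ℝ) • x := by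
  rw [mulVec_mulVec, lap_mul_dist hG, sub_mulVec, smul_mulVec, one_mulVec, vecMulVec_mulVec]
  congr 1
  ext i
  simp [dotProduct, mul_comm]

open Matrix in
open scoped Classical in
/-- The distance matrix of a tree is negative definite on the sum-zero hyperplane. -/
theorem dist_cnd {n : ℕ} {G : SimpleGraph (Fin n)} (hG : G.IsTree) (x : Fin n → ℝ)
    (hx : ∑ i, x i = 0) (hx0 : x ≠ 0) : x ⬝ᵥ (distMatrix G *ᵥ x) < 0 := by
  set z := distMatrix G *ᵥ x with hz
  have hL : G.lapMatrix ℝ *ᵥ z = -(2 : ℝ) • x := by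
    rw [hz, lap_mulVec_dist hG, hx]; simp
  have hps := SimpleGraph.posSemidef_lapMatrix ℝ G
  have h1 : z ⬝ᵥ (G.lapMatrix ℝ *ᵥ z) = -2 * (x ⬝ᵥ z) := by
    rw [hL, dotProduct_smul, dotProduct_comm, smul_eq_mul]
  have h2 : 0 ≤ z ⬝ᵥ (G.lapMatrix ℝ *ᵥ z) := by
    simpa using hps.dotProduct_mulVec_nonneg z
  have h3 : z ⬝ᵥ (G.lapMatrix ℝ *ᵥ z) ≠ 0 := fun h => by
    have h4 : G.lapMatrix ℝ *ᵥ z = 0 := (hps.dotProduct_mulVec_zero_iff z).1 (by simpa using h)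
    rw [hL] at h4
    exact hx0 ((smul_eq_zero.1 h4).resolve_left (by norm_num))
  have h5 := lt_of_le_of_ne h2 (Ne.symm h3)
  linarith

open scoped Classical in
theorem sum_degree_tree {n : ℕ} {G : SimpleGraph (Fin n)} (hG : G.IsTree) :
    ∑ i, (G.degree i : ℝ) = 2 * ((n : ℝ) - 1) := by
  have h1 := G.sum_degrees_eq_twice_card_edges
  have h2 := hG.card_edgeFinset
  rw [Fintype.card_fin] at h2
  have h3 : ((∑ i, G.degree i : ℕ) : ℝ) = ((2 * G.edgeFinset.card : ℕ) : ℝ) := by rw [h1]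
  have h4 : ((G.edgeFinset.card + 1 : ℕ) : ℝ) = n := by rw [h2]
  push_cast at h3 h4
  rw [h3, ← h4]; ring

theorem sum_tauVec {n : ℕ} {G : SimpleGraph (Fin n)} (hG : G.IsTree) : ∑ i, tauVec G i = 2 := by
  simp only [tauVec, Finset.sum_sub_distrib, sum_degree_tree hG]
  simp; ring

open Matrix in
open scoped Classical in
/-- `D τ` is a positive constant vector.  It is constant because it lies in the kernel of `L`; the
constant is positive because otherwise `1ᵀ D 1 ≤ 0`, by splitting `1` into a multiple of `τ` and a
sum-zero vector, which are `D`-orthogonal. -/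
theorem exists_dist_tau {n : ℕ} (hn : 2 ≤ n) {G : SimpleGraph (Fin n)} (hG : G.IsTree) :
    ∃ c : ℝ, 0 < c ∧ distMatrix G *ᵥ tauVec G = fun _ => c := by
  have hker : G.lapMatrix ℝ *ᵥ (distMatrix G *ᵥ tauVec G) = 0 := by
    rw [lap_mulVec_dist hG, sum_tauVec hG, sub_self]
  rw [SimpleGraph.lapMatrix_mulVec_eq_zero_iff_forall_reachable] at hker
  let i0 : Fin n := ⟨0, by omega⟩
  let i1 : Fin n := ⟨1, by omega⟩
  have h01 : i0 ≠ i1 := by simp [i0, i1]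
  set c := (distMatrix G *ᵥ tauVec G) i0 with hc
  have hconst : distMatrix G *ᵥ tauVec G = fun _ => c :=
    funext fun i => hker i i0 (hG.connected i i0)
  refine ⟨c, ?_, hconst⟩
  let one : Fin n → ℝ := fun _ => 1
  -- the sum-zero component of the all-ones vector, since `∑ τ i = 2`
  let w : Fin n → ℝ := one - ((n : ℝ) / 2) • tauVec G
  have hw : ∑ i, w i = 0 := by
    simp only [w, one, Pi.sub_apply, Pi.smul_apply, smul_eq_mul, Finset.sum_sub_distrib,
      ← Finset.mul_sum, sum_tauVec hG]
    simp
  have hone : one = ((n : ℝ) / 2) • tauVec G + w := by simp [w]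
  have hww : w ⬝ᵥ (distMatrix G *ᵥ w) ≤ 0 := by
    by_cases h : w = 0
    · rw [h]; simp
    · exact (dist_cnd hG w hw h).le
  have htt : tauVec G ⬝ᵥ (distMatrix G *ᵥ tauVec G) = 2 * c := by
    rw [hconst]; simp only [dotProduct, ← Finset.sum_mul, sum_tauVec hG]
  have hwt : w ⬝ᵥ (distMatrix G *ᵥ tauVec G) = 0 := by
    rw [hconst]; simp only [dotProduct, ← Finset.sum_mul, hw, zero_mul]
  have htw : tauVec G ⬝ᵥ (distMatrix G *ᵥ w) = 0 := by rw [dotProduct_dist_comm, hwt]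
  have hexp : one ⬝ᵥ (distMatrix G *ᵥ one) = ((n : ℝ) / 2) ^ 2 * (2 * c) +
      w ⬝ᵥ (distMatrix G *ᵥ w) := by
    rw [hone]
    simp only [mulVec_add, mulVec_smul, dotProduct_add, add_dotProduct, smul_dotProduct,
      dotProduct_smul, smul_eq_mul, htt, hwt, htw]
    ring
  have hpos : 0 < one ⬝ᵥ (distMatrix G *ᵥ one) := by
    simp only [dotProduct, mulVec, one, one_mul, mul_one]
    refine Finset.sum_pos' (fun i _ => Finset.sum_nonneg fun j _ => Nat.cast_nonneg _)
      ⟨i0, Finset.mem_univ _, Finset.sum_pos' (fun j _ => Nat.cast_nonneg _)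
        ⟨i1, Finset.mem_univ _, ?_⟩⟩
    exact Nat.cast_pos.2 (hG.connected.pos_dist_of_ne h01)
  by_contra hcn
  have : ((n : ℝ) / 2) ^ 2 * (2 * c) ≤ 0 :=
    mul_nonpos_of_nonneg_of_nonpos (sq_nonneg _) (by linarith)
  linarith

theorem trace_dist {n : ℕ} (G : SimpleGraph (Fin n)) : (distMatrix G).trace = 0 := by
  simp [Matrix.trace, distMatrix]

theorem deltaPoly_eq {n : ℕ} (G : SimpleGraph (Fin n)) :
    deltaPoly G = (-1) ^ n * (distMatrix G).charpoly := by
  have : (distMatrix G).map C - (X : ℝ[X]) • (1 : Matrix (Fin n) (Fin n) ℝ[X]) =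
      - (distMatrix G).charmatrix := by
    ext i j : 2
    simp [Matrix.charmatrix, Matrix.smul_one_eq_diagonal]
  rw [deltaPoly, this, Matrix.det_neg, Fintype.card_fin, Matrix.charpoly]

theorem abs_coeff_deltaPoly {n : ℕ} (G : SimpleGraph (Fin n)) (k : ℕ) :
    |(deltaPoly G).coeff k| = |(distMatrix G).charpoly.coeff k| := by
  rw [deltaPoly_eq]
  rcases neg_one_pow_eq_or ℝ[X] n with h | h <;> rw [h] <;> simp

open Matrix in
open scoped Classical in
/-- The bound `δ_1 / δ_0 = -tr D⁻¹ ≤ n`, from the explicit inverse `D⁻¹ = ττᵀ / (2c) - L / 2`. -/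
theorem coeff_one_charpoly {n : ℕ} (hn : 2 ≤ n) {G : SimpleGraph (Fin n)} (hG : G.IsTree) :
    ∃ r : ℝ, r ≤ n ∧
      (distMatrix G).charpoly.coeff 1 = r * (distMatrix G).charpoly.coeff 0 := by
  obtain ⟨c, hc, hcv⟩ := exists_dist_tau hn hG
  set D := distMatrix G with hD
  set t := tauVec G with ht
  let B : Matrix (Fin n) (Fin n) ℝ := (2 * c)⁻¹ • vecMulVec t t - (1 / 2 : ℝ) • G.lapMatrix ℝ
  have hBD : B * D = 1 := by
    have h1 : vecMulVec t t * D = c • vecMulVec t (fun _ => 1) := by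
      rw [vecMulVec_mul, ← mulVec_transpose, hD, distMatrix_symm, hcv]
      ext i j; simp [vecMulVec_apply, mul_comm]
    have h2 : G.lapMatrix ℝ * D = vecMulVec t (fun _ => 1) - (2 : ℝ) • 1 := lap_mul_dist hG
    simp only [B, sub_mul, Matrix.smul_mul, h1, h2]
    ext i j
    simp only [Matrix.sub_apply, Matrix.smul_apply, smul_eq_mul]
    field_simp
    ring
  have hDB : D * B = 1 := mul_eq_one_comm.1 hBD
  have hfac : deltaPoly G = C D.det * (1 + (X : ℝ[X]) • (-B).map C).det := by
    have h1 : D.map C - (X : ℝ[X]) • (1 : Matrix (Fin n) (Fin n) ℝ[X]) =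
        D.map C * (1 + (X : ℝ[X]) • (-B).map C) := by
      have h2 : D.map C * (-B).map (C : ℝ →+* ℝ[X]) = -1 := by
        rw [← Matrix.map_mul, mul_neg, hDB]
        ext i j : 2
        simp [Matrix.one_apply, apply_ite]
      rw [mul_add, mul_one, Matrix.mul_smul, h2, smul_neg, sub_eq_add_neg]
    have h3 : (D.map (C : ℝ →+* ℝ[X])).det = C D.det := (RingHom.map_det C D).symm
    rw [deltaPoly, ← hD, h1, det_mul, h3]
  have hc1 : (deltaPoly G).coeff 1 = D.det * -B.trace := by
    rw [hfac, coeff_C_mul, coeff_det_one_add_X_smul_one, trace_neg]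
  have hc0 : (deltaPoly G).coeff 0 = D.det := by
    rw [hfac, coeff_C_mul, coeff_zero_eq_eval_zero, eval_det_add_X_smul, det_one, eval_one, mul_one]
  have htr : -B.trace ≤ n := by
    have h1 : (vecMulVec t t).trace = ∑ i, t i ^ 2 := by
      simp [Matrix.trace, vecMulVec_apply, sq]
    have h2 : (G.lapMatrix ℝ).trace = 2 * ((n : ℝ) - 1) := by
      rw [← sum_degree_tree hG]
      simp [Matrix.trace, SimpleGraph.lapMatrix, SimpleGraph.degMatrix]
    have h3 : B.trace = (2 * c)⁻¹ * ∑ i, t i ^ 2 - 1 / 2 * (2 * ((n : ℝ) - 1)) := by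
      simp only [B, trace_sub, trace_smul, h1, h2, smul_eq_mul]
    have h4 : 0 ≤ (2 * c)⁻¹ * ∑ i, t i ^ 2 :=
      mul_nonneg (by positivity) (Finset.sum_nonneg fun i _ => sq_nonneg _)
    linarith
  refine ⟨-B.trace, htr, ?_⟩
  have h : (deltaPoly G).coeff 1 = -B.trace * (deltaPoly G).coeff 0 := by rw [hc1, hc0, mul_comm]
  rw [deltaPoly_eq, ← hD] at h
  rcases neg_one_pow_eq_or ℝ[X] n with h' | h' <;> rw [h'] at h
  · simpa using h
  · simp only [neg_mul, one_mul, coeff_neg] at h ⊢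
    linarith

open Matrix in
/-- Two nonnegative eigenvalues would give a plane on which `D` is nonnegative; that plane meets the
sum-zero hyperplane, contradicting `dist_cnd`. -/
theorem at_most_one_nonneg {n : ℕ} {G : SimpleGraph (Fin n)} (hG : G.IsTree) {i j : Fin n}
    (hij : i ≠ j) (hi : 0 ≤ (distMatrix_herm G).eigenvalues i) :
    (distMatrix_herm G).eigenvalues j < 0 := by
  by_contra! hj
  let hH := distMatrix_herm G
  set u : Fin n → ℝ := ⇑(hH.eigenvectorBasis i) with hu
  set v : Fin n → ℝ := ⇑(hH.eigenvectorBasis j) with hv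
  have hdot : ∀ a b : Fin n, (⇑(hH.eigenvectorBasis a) : Fin n → ℝ) ⬝ᵥ ⇑(hH.eigenvectorBasis b) =
      if a = b then 1 else 0 := fun a b => by
    rw [← orthonormal_iff_ite.1 hH.eigenvectorBasis.orthonormal a b]
    simp [dotProduct, PiLp.inner_apply, mul_comm]
  have huu : u ⬝ᵥ u = 1 := by rw [hu, hdot]; simp
  have hvv : v ⬝ᵥ v = 1 := by rw [hv, hdot]; simp
  have huv : u ⬝ᵥ v = 0 := by rw [hu, hv, hdot]; simp [hij]
  have hvu : v ⬝ᵥ u = 0 := by rw [dotProduct_comm, huv]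
  have hDu : distMatrix G *ᵥ u = hH.eigenvalues i • u := hH.mulVec_eigenvectorBasis i
  have hDv : distMatrix G *ᵥ v = hH.eigenvalues j • v := hH.mulVec_eigenvectorBasis j
  by_cases ha : ∑ k, u k = 0
  · have := dist_cnd hG u ha (fun h => by simp [h] at huu)
    rw [hDu, dotProduct_smul, huu] at this
    simp at this
    exact absurd hi (not_le.2 this)
  -- otherwise `b • u - a • v` is a nonzero sum-zero combination of the two eigenvectors
  · set a := ∑ k, u k with ha'
    set b := ∑ k, v k with hb'
    have hx : ∑ k, (b • u - a • v) k = 0 := by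
      simp only [Pi.sub_apply, Pi.smul_apply, smul_eq_mul, Finset.sum_sub_distrib,
        ← Finset.mul_sum, ← ha', ← hb']
      ring
    have hx0 : b • u - a • v ≠ 0 := fun h => by
      have h1 : v ⬝ᵥ (b • u - a • v) = 0 := by rw [h]; simp
      rw [dotProduct_sub, dotProduct_smul, dotProduct_smul, hvu, hvv] at h1
      simp at h1
      exact ha h1
    have := dist_cnd hG _ hx hx0
    simp only [mulVec_sub, mulVec_smul, hDu, hDv, dotProduct_sub, sub_dotProduct, smul_dotProduct,
      dotProduct_smul, smul_eq_mul, huu, hvv, huv, hvu] at this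
    have h1 : 0 ≤ b ^ 2 * hH.eigenvalues i := mul_nonneg (sq_nonneg _) hi
    have h2 : 0 ≤ a ^ 2 * hH.eigenvalues j := mul_nonneg (sq_nonneg _) hj
    nlinarith

/-! ### The characteristic polynomial and the peak -/

/-- The coefficients of the (monic) characteristic polynomial are negative up to degree `n - 2`. -/
theorem coeff_charpoly_neg {n : ℕ} (hn : 2 ≤ n) {G : SimpleGraph (Fin n)} (hG : G.IsTree)
    {k : ℕ} (hk : k + 2 ≤ n) : (distMatrix G).charpoly.coeff k < 0 := by
  let hH := distMatrix_herm G
  have hsum : ∑ i, hH.eigenvalues i = 0 := by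
    have := hH.trace_eq_sum_eigenvalues
    rw [trace_dist] at this
    simpa using this.symm
  obtain ⟨i0, hi0⟩ : ∃ i, 0 ≤ hH.eigenvalues i := by
    by_contra! h
    have : ∑ i, hH.eigenvalues i < 0 :=
      Finset.sum_neg (fun i _ => h i) ⟨⟨0, by omega⟩, Finset.mem_univ _⟩
    linarith
  let s : Multiset ℝ := (Finset.univ.erase i0).val.map fun i => - hH.eigenvalues i
  have hs : ∀ a ∈ s, 0 < a := fun a ha => by
    obtain ⟨i, hi, rfl⟩ := Multiset.mem_map.1 ha
    have hne : i ≠ i0 := (Finset.mem_erase.1 (Finset.mem_def.2 hi)).1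
    exact neg_pos.2 (at_most_one_nonneg hG hne.symm hi0)
  have hcard : s.card = n - 1 := by
    simp only [s, Multiset.card_map, Finset.card_val]
    rw [Finset.card_erase_of_mem (Finset.mem_univ _), Finset.card_univ, Fintype.card_fin]
  have hssum : s.sum = hH.eigenvalues i0 := by
    have h1 : s.sum = ∑ i ∈ Finset.univ.erase i0, - hH.eigenvalues i := rfl
    rw [← Finset.add_sum_erase _ _ (Finset.mem_univ i0)] at hsum
    rw [h1, Finset.sum_neg_distrib]
    linarith
  have hprod : (s.map fun a => X + C a).prod =
      ∏ i ∈ Finset.univ.erase i0, (X - C (hH.eigenvalues i)) := by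
    simp only [s, Multiset.map_map]
    refine congrArg Multiset.prod (Multiset.map_congr rfl fun i _ => ?_)
    simp [sub_eq_add_neg]
  have hchar : (distMatrix G).charpoly = - ((C s.sum - X) * (s.map fun a => X + C a).prod) := by
    rw [hprod, hssum, hH.charpoly_eq, ← Finset.mul_prod_erase _ _ (Finset.mem_univ i0)]
    simp only [RCLike.ofReal_real_eq_id, id]
    ring
  have := (sign_coeff s hs).2.2.1 k (by omega)
  rw [hchar, coeff_neg]
  linarith

/-- `(k + 1) |δ_{k+1}| ≤ (n - k) |δ_k|`; Newton's inequalities give the induction step. -/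
theorem coeff_ratio {n : ℕ} (hn : 3 ≤ n) {G : SimpleGraph (Fin n)} (hG : G.IsTree)
    (k : ℕ) (hk : k + 3 ≤ n) :
    ((k : ℝ) + 1) * (-(distMatrix G).charpoly.coeff (k + 1)) ≤
      ((n : ℝ) - k) * (-(distMatrix G).charpoly.coeff k) := by
  induction k with
  | zero =>
    obtain ⟨r, hr, h⟩ := coeff_one_charpoly (by omega) hG
    have h0 := coeff_charpoly_neg (k := 0) (by omega) hG (by omega)
    simp only [zero_add, h, Nat.cast_zero]
    nlinarith
  | succ k ih =>
    have hN := newton k (distMatrix_herm G).splits_charpoly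
      (n := n) (by rw [Matrix.charpoly_natDegree_eq_dim, Fintype.card_fin]) (by omega)
    have h0 := coeff_charpoly_neg (k := k) (by omega) hG (by omega)
    have h1 := coeff_charpoly_neg (k := k + 1) (by omega) hG (by omega)
    have ih := ih (by omega)
    have hkn : (k : ℝ) + 1 + 3 ≤ n := by exact_mod_cast hk
    set a := (distMatrix G).charpoly.coeff k
    set b := (distMatrix G).charpoly.coeff (k + 1)
    set d := (distMatrix G).charpoly.coeff (k + 2)
    change (((k + 1 : ℕ) : ℝ) + 1) * -d ≤ ((n : ℝ) - (k + 1 : ℕ)) * -b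
    push_cast
    have hpos : 0 < ((n : ℝ) - k) * -a := mul_pos (by linarith) (by linarith)
    refine le_of_mul_le_mul_left ?_ hpos
    have h2 := mul_le_mul_of_nonneg_right ih
      (mul_nonneg (by linarith : (0 : ℝ) ≤ n - k - 1) (by linarith : 0 ≤ -b))
    nlinarith

/-- For a tree `T` on `n ≥ 3` vertices, every index `m` at which the normalized
coefficient sequence `d_0(T), ..., d_{n-2}(T)` attains its maximum satisfies
`m ≤ ⌈(2/3) n⌉`. -/
theorem peak_upper_bound_tree_two_thirds (n : ℕ) (hn : 3 ≤ n)
    (G : SimpleGraph (Fin n)) (hG : G.IsTree) :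
    ∀ m ≤ n - 2, (∀ i ≤ n - 2, normCoeff G i ≤ normCoeff G m) →
      (m : ℤ) ≤ ⌈((2 : ℝ) / 3) * (n : ℝ)⌉ := by
  intro m hm hmax
  rcases Nat.eq_zero_or_pos m with rfl | hm0
  · rw [Nat.cast_zero]
    exact Int.ceil_nonneg (by positivity)
  obtain ⟨k, rfl⟩ : ∃ k, m = k + 1 := ⟨m - 1, by omega⟩
  have h0 := coeff_charpoly_neg (k := k) (by omega) hG (by omega)
  have h1 := coeff_charpoly_neg (k := k + 1) (by omega) hG (by omega)
  have hr := coeff_ratio hn hG k (by omega)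
  have hle := hmax k (by omega)
  rw [normCoeff, normCoeff, abs_coeff_deltaPoly, abs_coeff_deltaPoly, abs_of_neg h0,
    abs_of_neg h1, pow_succ, mul_div_right_comm, mul_assoc] at hle
  have hle := le_of_mul_le_mul_left hle (by positivity)
  have hkn : (k : ℝ) + 1 + 2 ≤ n := by
    have : k + 1 + 2 ≤ n := by omega
    exact_mod_cast this
  have hreal : (k : ℝ) + 1 ≤ 2 * ((n : ℝ) - k) := by
    have h2 := mul_le_mul_of_nonneg_left hle (by linarith : (0 : ℝ) ≤ n - k)
    refine le_of_mul_le_mul_right ?_ (neg_pos.2 h1)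
    linarith
  rw [Nat.cast_add, Nat.cast_one, Int.add_one_le_iff, Int.lt_ceil]
  have : (3 * k + 1 : ℝ) ≤ 2 * n := by linarith
  push_cast
  linarith
end
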